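/- Let m ≥ 1, n ≥ 2 and let Ψ be an endomorphism of G = ℤ^m × F_n. Then Ψ is surjective if and only if there exist a surjective endomorphism φ of F_n, an m×m integer matrix Q with det(Q) = 1 or det(Q) = -1, and an n×m integer matrix P such that Ψ(a,u) = (aQ + ūP, φ(u)) for all (a,u) ∈ G. -/

import Mathlib

open Matrix

/-- The abelianization vector (vector of exponent sums of the generators)
of an element of the free group `F_n`. -/
def abVec {n : ℕ} (u : FreeGroup (Fin n)) : Fin n → ℤ :=
  Multiplicative.toAdd ((FreeGroup.lift fun i => Multiplicative.ofAdd (Pi.single i (1 : ℤ))) u)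

/-- The free-abelian times free group `G = ℤ^m × F_n`. -/
abbrev GFab (m n : ℕ) := Multiplicative (Fin m → ℤ) × FreeGroup (Fin n)



theorem abVec_one' {n : ℕ} : abVec (1 : FreeGroup (Fin n)) = 0 := by
  simp [abVec]

theorem abVec_mul' {n : ℕ} (u v : FreeGroup (Fin n)) : abVec (u * v) = abVec u + abVec v := by
  simp [abVec]

theorem abVec_inv' {n : ℕ} (u : FreeGroup (Fin n)) : abVec u⁻¹ = - abVec u := by
  simp [abVec]

theorem abVec_of' {n : ℕ} (i : Fin n) : abVec (FreeGroup.of i) = Pi.single i 1 := by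
  simp [abVec]

theorem free_hom_matrix {n k : ℕ} (f : FreeGroup (Fin n) →* Multiplicative (Fin k → ℤ)) :
    ∃ P : Matrix (Fin n) (Fin k) ℤ, ∀ u, (f u).toAdd = abVec u ᵥ* P := by
  refine ⟨Matrix.of fun i => (f (FreeGroup.of i)).toAdd, fun u => ?_⟩
  induction u using FreeGroup.induction_on with
  | C1 => simp [abVec_one']
  | of i => rw [abVec_of', Matrix.single_one_vecMul]; rfl
  | inv_of i h => rw [map_inv, abVec_inv', Matrix.neg_vecMul, toAdd_inv, h]
  | mul u v hu hv => rw [map_mul, abVec_mul', Matrix.add_vecMul, toAdd_mul, hu, hv]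

theorem ab_hom_matrix {m k : ℕ} (f : Multiplicative (Fin m → ℤ) →* Multiplicative (Fin k → ℤ)) :
    ∃ Q : Matrix (Fin m) (Fin k) ℤ, ∀ a, (f (Multiplicative.ofAdd a)).toAdd = a ᵥ* Q := by
  let g : (Fin m → ℤ) →ₗ[ℤ] (Fin k → ℤ) := (MonoidHom.toAdditive f).toIntLinearMap
  refine ⟨LinearMap.toMatrixRight' g, fun a => ?_⟩
  have h : Matrix.toLinearMapRight' (LinearMap.toMatrixRight' g) a = g a := by
    simp [Matrix.toLinearMapRight']
  rw [Matrix.toLinearMapRight'_apply] at h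
  exact h.symm

theorem free_center {n : ℕ} (hn : 2 ≤ n) (z : FreeGroup (Fin n))
    (hz : ∀ v, z * v = v * z) : z = 1 := by
  by_contra hne
  have hw : z.toWord ≠ [] := by simpa [FreeGroup.toWord_eq_nil_iff] using hne
  obtain ⟨p, t, hpt⟩ := List.exists_cons_of_ne_nil hw
  have : Nontrivial (Fin n) := Fin.nontrivial_iff_two_le.2 hn
  obtain ⟨j, hj⟩ := exists_ne p.1
  set c := (z.toWord.getLast hw).2 with hc
  have hr : FreeGroup.IsReduced z.toWord := FreeGroup.isReduced_toWord
  have h1 : FreeGroup.IsReduced ((j, c) :: z.toWord) := by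
    rw [hpt] at hr ⊢
    rw [FreeGroup.isReduced_cons_cons]
    exact ⟨fun h => absurd h hj, hr⟩
  have h2 : FreeGroup.IsReduced (z.toWord ++ [(j, c)]) := by
    unfold FreeGroup.IsReduced
    rw [List.isChain_append]
    refine ⟨hr, List.isChain_singleton _, ?_⟩
    intro x hx y hy _
    rw [List.getLast?_eq_getLast_of_ne_nil hw] at hx
    simp at hx hy
    rw [← hx, ← hy]
  have h3 := congrArg FreeGroup.toWord (hz (FreeGroup.mk [(j, c)]))
  rw [FreeGroup.toWord_mul, FreeGroup.toWord_mul, FreeGroup.toWord_mk,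
    FreeGroup.IsReduced.singleton.reduce_eq, h2.reduce_eq] at h3
  have h4 := h1.reduce_eq
  rw [List.singleton_append, h4, hpt] at h3
  simp at h3
  exact hj (by rw [h3.1])

/-- An endomorphism Ψ of `ℤ^m × F_n` (m ≥ 1, n ≥ 2) is surjective iff it is of type I
with φ a surjective endomorphism of `F_n` and `det Q = ±1`. -/
theorem epi_characterization (m n : ℕ) (hm : 1 ≤ m) (hn : 2 ≤ n)
    (Ψ : GFab m n →* GFab m n) :
    Function.Surjective Ψ ↔
    ∃ (φ : FreeGroup (Fin n) →* FreeGroup (Fin n))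
      (Q : Matrix (Fin m) (Fin m) ℤ) (P : Matrix (Fin n) (Fin m) ℤ),
      Function.Surjective φ ∧ (Q.det = 1 ∨ Q.det = -1) ∧
      ∀ (a : Fin m → ℤ) (u : FreeGroup (Fin n)),
        Ψ (Multiplicative.ofAdd a, u)
          = (Multiplicative.ofAdd (a ᵥ* Q + abVec u ᵥ* P), φ u) := by
  constructor
  · intro hs
    let φ : FreeGroup (Fin n) →* FreeGroup (Fin n) :=
      (MonoidHom.snd _ _).comp (Ψ.comp (MonoidHom.inr _ _))
    obtain ⟨Q, hQ⟩ := ab_hom_matrix ((MonoidHom.fst _ _).comp (Ψ.comp (MonoidHom.inl _ _)))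
    obtain ⟨P, hP⟩ := free_hom_matrix ((MonoidHom.fst _ _).comp (Ψ.comp (MonoidHom.inr _ _)))
    have hc : ∀ a : Fin m → ℤ, (Ψ (Multiplicative.ofAdd a, 1)).2 = 1 := by
      intro a
      apply free_center hn
      intro v
      obtain ⟨⟨b, u⟩, hb⟩ := hs (1, v)
      have hv : v = (Ψ (b, u)).2 := by rw [hb]
      rw [hv, ← Prod.snd_mul, ← Prod.snd_mul, ← map_mul, ← map_mul]
      simp [mul_comm]
    have hform : ∀ (a : Fin m → ℤ) (u : FreeGroup (Fin n)),
        Ψ (Multiplicative.ofAdd a, u)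
          = (Multiplicative.ofAdd (a ᵥ* Q + abVec u ᵥ* P), φ u) := by
      intro a u
      have h0 : ((Multiplicative.ofAdd a, u) : GFab m n) =
        (Multiplicative.ofAdd a, 1) * (1, u) := by simp
      rw [h0, map_mul, ← hQ, ← hP]
      apply Prod.ext
      · rfl
      · rw [Prod.snd_mul, hc, one_mul]; rfl
    have hφ : Function.Surjective φ := by
      intro v
      obtain ⟨⟨b, u⟩, hb⟩ := hs (1, v)
      have h1 := hform b.toAdd u
      rw [ofAdd_toAdd, hb] at h1
      exact ⟨u, (congrArg Prod.snd h1).symm⟩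
    refine ⟨φ, Q, P, hφ, ?_, hform⟩
    obtain ⟨A, hA⟩ := free_hom_matrix ((FreeGroup.lift fun i =>
      Multiplicative.ofAdd (Pi.single i (1 : ℤ) : Fin n → ℤ)).comp φ)
    have hA' : ∀ u, abVec (φ u) = abVec u ᵥ* A := hA
    choose s hsφ using hφ
    have hBA : (Matrix.of fun i => abVec (s (FreeGroup.of i))) * A = 1 := by
      ext i j
      have h1 := hA' (s (FreeGroup.of i))
      rw [hsφ, abVec_of'] at h1
      rw [Matrix.mul_apply_eq_vecMul]
      change (abVec (s (FreeGroup.of i)) ᵥ* A) j = _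
      rw [← h1, Matrix.one_apply, Pi.single_apply]
      simp [eq_comm]
    have hAB := mul_eq_one_comm.1 hBA
    have hker : ∀ u, φ u = 1 → abVec u = 0 := by
      intro u hu
      have h1 := hA' u
      rw [hu, abVec_one'] at h1
      rw [← Matrix.vecMul_one (abVec u), ← hAB, ← Matrix.vecMul_vecMul, ← h1,
        Matrix.zero_vecMul]
    have hQs : Function.Surjective Q.vecMul := by
      intro b
      obtain ⟨⟨a, u⟩, ha⟩ := hs (Multiplicative.ofAdd b, 1)
      have h1 := hform a.toAdd u
      rw [ofAdd_toAdd, ha] at h1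
      have h2 := hker u (congrArg Prod.snd h1).symm
      have h3 := congrArg (fun x => x.1.toAdd) h1
      simp [h2] at h3
      exact ⟨a.toAdd, h3.symm⟩
    rw [← Int.isUnit_iff, ← Matrix.isUnit_iff_isUnit_det]
    exact vecMul_surjective_iff_isUnit.1 hQs
  · rintro ⟨φ, Q, P, hφ, hQ, hΨ⟩ ⟨b, v⟩
    obtain ⟨u, hu⟩ := hφ v
    rw [← Int.isUnit_iff, ← Matrix.isUnit_iff_isUnit_det] at hQ
    obtain ⟨a, ha⟩ := vecMul_surjective_iff_isUnit.2 hQ (b.toAdd - abVec u ᵥ* P)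
    refine ⟨(Multiplicative.ofAdd a, u), ?_⟩
    have ha' : a ᵥ* Q = b.toAdd - abVec u ᵥ* P := ha
    rw [hΨ, hu, ha', sub_add_cancel, ofAdd_toAdd]
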